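/- Let p ∈ (1, ∞) and f ∈ L¹(Q0). Then there is a purely dimensional constant c_n such that ‖f − f_{Q0}‖_{L^p(Q0)} ≤ c_n · p · ‖f‖_{SJN_p(Q0)}. -/

import Mathlib

/-!
The left-hand side is dominated by a sparse sum, which is then compared with the sparse
functional by a geometric summation over generations.

*Sparse domination.* For a dyadic cube `Q`, let the stopping cubes of `Q` be the maximal dyadic
cubes strictly inside `Q` over which the average of `|f - f_Q|` exceeds `2 osc(Q)`. Their total
measure is at most `|Q| / 2` (`tsum_stop_le`). The parent of a stopping cube `P` is not bad, whence
`|f_P - f_Q| ≤ 2 ^ (n + 1) osc(Q)` (`enorm_cubeAvg_stop_sub_le`), while off the stopping cubes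
`|f - f_Q| ≤ 2 osc(Q)` almost everywhere by Lebesgue differentiation (`ae_enorm_sub_le`). Iterating
from `Q0` produces a family `S`; two cubes of `S` are disjoint or one is a descendant of the other
(`Sel.trichotomy`), so the children of `Q` in `S` are stopping cubes of `Q` and `S` is sparse
(`isSparse_sel`). Telescoping the averages bounds `|f - f_{Q0}|` at almost every point by
`2 ^ (n + 1)` times the sum of `osc(Q)` over the cubes `Q` of `S` containing that point.

*Summation.* Write `desc j Q` for the union of the `j`-th generation of stopping cubes below `Q`,
so `|desc j Q| ≤ 2 ^ (-j) |Q|` (`volume_desc_le`), and let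
`T_j = (∑_{Q ∈ S} osc(Q) ^ p 1_{desc j Q}) ^ (1 / p)`, called `layer` below. If `x` lies in exactly
`m + 1` cubes of `S`, the cube `i` generations above the smallest one contributes to `T_i(x)`, so
`|f - f_{Q0}| ≤ 2 ^ (n + 1) ∑_j T_j` almost everywhere (`enorm_sub_le_sum_layer`). Since
`|Q| ≤ 2 |E_Q|`, the sum `∑ osc(Q) ^ p |Q|` is at most twice the `p`-th power of the sparse
functional (`tsum_osc_rpow_le`), so `‖T_j‖_p ≤ 2 ^ ((1 - j) / p)` times the sparse functional.
Minkowski's inequality and `∑_j 2 ^ (-j / p) ≤ 2 p` (`tsum_geometric_rpow_le`) give the factor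
`p`. This replaces the usual duality argument with the dyadic maximal operator.
-/

open MeasureTheory ENNReal Set

noncomputable section

namespace SparseBrudnyi

/-- An axis-parallel cube in `ℝⁿ`, given by its lower corner and (positive) side length. -/
structure Cube (n : ℕ) where
  corner : Fin n → ℝ
  side : ℝ
  side_pos : 0 < side

namespace Cube

/-- The (half-open) cube, as a subset of `ℝⁿ`. -/
def toSet {n : ℕ} (Q : Cube n) : Set (Fin n → ℝ) :=
  Set.univ.pi fun i => Set.Ico (Q.corner i) (Q.corner i + Q.side)

/-- The open interior of a cube. -/
def inter {n : ℕ} (Q : Cube n) : Set (Fin n → ℝ) :=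
  Set.univ.pi fun i => Set.Ioo (Q.corner i) (Q.corner i + Q.side)

/-- The Lebesgue measure `|Q|` of a cube. -/
def vol {n : ℕ} (Q : Cube n) : ℝ≥0∞ := volume Q.toSet

end Cube

variable {n : ℕ}

/-- `Q` is a dyadic subcube of `Q0`, i.e. obtained from `Q0` by `m` successive bisections. -/
def IsDyadicSubcube (Q0 Q : Cube n) : Prop :=
  ∃ m : ℕ, ∃ j : Fin n → ℕ, (∀ i, j i < 2 ^ m) ∧
    Q.side = Q0.side / 2 ^ m ∧
    ∀ i, Q.corner i = Q0.corner i + (j i : ℝ) * Q0.side / 2 ^ m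

/-- `Ch_S(Q)`: the maximal (w.r.t. inclusion) cubes of `S` strictly contained in `Q`. -/
def sparseChildren (S : Set (Cube n)) (Q : Cube n) : Set (Cube n) :=
  {Q' | Q' ∈ S ∧ Q'.toSet ⊂ Q.toSet ∧
    ∀ Q'' ∈ S, Q''.toSet ⊂ Q.toSet → Q'.toSet ⊆ Q''.toSet → Q''.toSet ⊆ Q'.toSet}

/-- `E_Q = Q \ ⋃_{Q' ∈ Ch_S(Q)} Q'`. -/
def core (S : Set (Cube n)) (Q : Cube n) : Set (Fin n → ℝ) :=
  Q.toSet \ ⋃ Q' ∈ sparseChildren S Q, Cube.toSet Q'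

/-- A sparse family of dyadic subcubes of `Q0`:
`Σ_{Q' ∈ Ch_S(Q)} |Q'| ≤ (1/2)|Q|` for all `Q ∈ S`. -/
def IsSparse (Q0 : Cube n) (S : Set (Cube n)) : Prop :=
  S.Countable ∧ (∀ Q ∈ S, IsDyadicSubcube Q0 Q) ∧
    ∀ Q ∈ S, (∑' Q' : sparseChildren S Q, Cube.vol Q'.1) ≤ (1 / 2) * Q.vol

/-- A family sparse of order `lam`:
`Σ_{Q' ∈ Ch_S(Q)} |Q'|^lam ≤ (1/2)|Q|^lam` for all `Q ∈ S`. -/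
def IsSparseOfOrder (Q0 : Cube n) (lam : ℝ) (S : Set (Cube n)) : Prop :=
  S.Countable ∧ (∀ Q ∈ S, IsDyadicSubcube Q0 Q) ∧
    ∀ Q ∈ S, (∑' Q' : sparseChildren S Q, Cube.vol Q'.1 ^ lam) ≤ (1 / 2) * Q.vol ^ lam

/-- The average `f_Q = (1/|Q|) ∫_Q f`. -/
def cubeAvg (Q : Cube n) (f : (Fin n → ℝ) → ℝ) : ℝ :=
  ⨍ x in Q.toSet, f x

/-- The mean oscillation `(1/|Q|) ∫_Q |f - f_Q|`, as an extended nonnegative real. -/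
def osc (Q : Cube n) (f : (Fin n → ℝ) → ℝ) : ℝ≥0∞ :=
  Q.vol⁻¹ * ∫⁻ x in Q.toSet, ‖f x - cubeAvg Q f‖₊

/-- The sparse John–Nirenberg functional `‖f‖_{SJN_p(Q0)}`. -/
def sjnNorm (Q0 : Cube n) (p : ℝ) (f : (Fin n → ℝ) → ℝ) : ℝ≥0∞ :=
  ⨆ (S : Set (Cube n)) (_ : IsSparse Q0 S),
    (∫⁻ x in Q0.toSet,
      (∑' Q : S, (core S Q.1).indicator (fun _ => osc Q.1 f) x) ^ p) ^ (1 / p)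

/-- Best approximation error `E_k(f;Q)_q` by polynomials of degree at most `k-1` in `L^q(Q)`. -/
def polErr (k : ℕ) (q : ℝ) (f : (Fin n → ℝ) → ℝ) (Q : Cube n) : ℝ≥0∞ :=
  ⨅ (m : MvPolynomial (Fin n) ℝ) (_ : m.totalDegree < k),
    eLpNorm (fun x => f x - MvPolynomial.eval x m) (ENNReal.ofReal q)
      (volume.restrict Q.toSet)

/-- The sparse Brudnyi functional `‖f‖_{SV^{k,λ}_{p,q}(Q0)}`. -/
def svNorm (Q0 : Cube n) (k : ℕ) (lam p q : ℝ) (f : (Fin n → ℝ) → ℝ) : ℝ≥0∞ :=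
  ⨆ (S : Set (Cube n)) (_ : IsSparse Q0 S),
    (∫⁻ x in Q0.toSet,
      (∑' Q : S, (core S Q.1).indicator
        (fun _ => Cube.vol Q.1 ^ (lam / (n * q) - 1 / q) * polErr k q f Q.1) x) ^ p) ^ (1 / p)

/-- The fractional sparse Brudnyi functional `‖f‖_{S̃V^{k,λ}_{p,q}(Q0)}`, where the supremum
runs over families sparse of order `1 - λ/n`. -/
def svNormFrac (Q0 : Cube n) (k : ℕ) (lam p q : ℝ) (f : (Fin n → ℝ) → ℝ) : ℝ≥0∞ :=
  ⨆ (S : Set (Cube n)) (_ : IsSparseOfOrder Q0 (1 - lam / n) S),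
    (∫⁻ x in Q0.toSet,
      (∑' Q : S, (core S Q.1).indicator
        (fun _ => Cube.vol Q.1 ^ (lam / (n * q) - 1 / q) * polErr k q f Q.1) x) ^ p) ^ (1 / p)

/-- The dyadic local fractional maximal operator `M_{q,λ,Q0}`. -/
def fracMax (Q0 : Cube n) (q lam : ℝ) (f : (Fin n → ℝ) → ℝ) (x : Fin n → ℝ) : ℝ≥0∞ :=
  ⨆ (Q : Cube n) (_ : IsDyadicSubcube Q0 Q) (_ : x ∈ Q.toSet),
    (Q.vol ^ (lam / n - 1) * ∫⁻ y in Q.toSet, (‖f y‖₊ : ℝ≥0∞) ^ q) ^ (1 / q)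

/-- The BMO seminorm over all subcubes of `Q0`. -/
def bmoNorm (Q0 : Cube n) (f : (Fin n → ℝ) → ℝ) : ℝ≥0∞ :=
  ⨆ (Q : Cube n) (_ : Q.toSet ⊆ Q0.toSet), osc Q f

/-- A packing of `Q0`: a countable family of subcubes with pairwise disjoint interiors. -/
def IsPacking (Q0 : Cube n) (P : Set (Cube n)) : Prop :=
  P.Countable ∧ (∀ Q ∈ P, Q.toSet ⊆ Q0.toSet) ∧
    P.Pairwise fun Q Q' => Disjoint Q.inter Q'.inter

/-- The John–Nirenberg functional `‖f‖_{JN_p(Q0)}`. -/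
def jnNorm (Q0 : Cube n) (p : ℝ) (f : (Fin n → ℝ) → ℝ) : ℝ≥0∞ :=
  ⨆ (P : Set (Cube n)) (_ : IsPacking Q0 P),
    (∑' Q : P, osc Q.1 f ^ p * Cube.vol Q.1) ^ (1 / p)

/-- The Garsia–Rodemich functional `‖f‖_{GaRo_{L(p,∞)}(Q0)}` (written via `p'`). -/
def garoNorm (Q0 : Cube n) (p' : ℝ) (f : (Fin n → ℝ) → ℝ) : ℝ≥0∞ :=
  ⨆ (P : Set (Cube n)) (_ : IsPacking Q0 P),
    (∑' Q : P, ∫⁻ x in (Q.1 : Cube n).toSet, ‖f x - cubeAvg Q.1 f‖₊) /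
      (∑' Q : P, Cube.vol Q.1) ^ (1 / p')


/-! ### Geometry of the dyadic grid -/

namespace Cube

lemma mem_toSet {Q : Cube n} {x : Fin n → ℝ} :
    x ∈ Q.toSet ↔ ∀ i, Q.corner i ≤ x i ∧ x i < Q.corner i + Q.side := by
  simp [toSet, Set.mem_pi]

lemma corner_mem (Q : Cube n) : Q.corner ∈ Q.toSet :=
  mem_toSet.2 fun _ => ⟨le_rfl, lt_add_of_pos_right _ Q.side_pos⟩

lemma measurableSet_toSet (Q : Cube n) : MeasurableSet Q.toSet :=
  MeasurableSet.univ_pi fun _ => measurableSet_Ico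

lemma vol_eq (Q : Cube n) : Q.vol = ENNReal.ofReal Q.side ^ n := by
  simp [vol, toSet, Real.volume_pi_Ico]

lemma vol_ne_zero (Q : Cube n) : Q.vol ≠ 0 := by
  rw [vol_eq]
  exact pow_ne_zero _ (by simpa using Q.side_pos)

lemma vol_ne_top (Q : Cube n) : Q.vol ≠ ∞ := by
  rw [vol_eq]
  exact ENNReal.pow_ne_top ENNReal.ofReal_ne_top

/-- A cube of positive dimension is determined by its underlying set. -/
lemma eq_of_toSet_eq (hn : 0 < n) {Q R : Cube n} (h : Q.toSet = R.toSet) : Q = R := by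
  have h1 := mem_toSet.1 (h ▸ Q.corner_mem)
  have h2 := mem_toSet.1 (h.symm ▸ R.corner_mem)
  have hc : Q.corner = R.corner := funext fun i => le_antisymm (h2 i).1 (h1 i).1
  have hv : Q.vol = R.vol := by simp only [vol, h]
  rw [vol_eq, vol_eq, ← ENNReal.ofReal_pow Q.side_pos.le, ← ENNReal.ofReal_pow R.side_pos.le,
    ENNReal.ofReal_eq_ofReal_iff (pow_nonneg Q.side_pos.le _) (pow_nonneg R.side_pos.le _)] at hv
  have hs : Q.side = R.side :=
    (pow_left_inj₀ Q.side_pos.le R.side_pos.le hn.ne').1 hv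
  cases Q; cases R; simp_all

end Cube

/-- Two real dyadic intervals `[a / 2 ^ k, (a + 1) / 2 ^ k)` and `[b / 2 ^ l, (b + 1) / 2 ^ l)`
with `k ≤ l` and a common point `t` are nested. -/
lemma dyadic_interval_nested {k l a b : ℕ} (hkl : k ≤ l) {t : ℝ}
    (ha : (a : ℝ) ≤ t * 2 ^ k) (ha' : t * 2 ^ k < a + 1)
    (hb : (b : ℝ) ≤ t * 2 ^ l) (hb' : t * 2 ^ l < b + 1) :
    a * 2 ^ (l - k) ≤ b ∧ b + 1 ≤ (a + 1) * 2 ^ (l - k) := by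
  obtain ⟨d, rfl⟩ := Nat.exists_eq_add_of_le hkl
  have hd : (0 : ℝ) < 2 ^ d := by positivity
  rw [Nat.add_sub_cancel_left]
  rw [pow_add, ← mul_assoc] at hb hb'
  constructor
  · apply Nat.lt_succ_iff.1
    have : (a : ℝ) * 2 ^ d < b + 1 :=
      lt_of_le_of_lt (mul_le_mul_of_nonneg_right ha hd.le) hb'
    exact_mod_cast this
  · have : (b : ℝ) < (a + 1) * 2 ^ d :=
      lt_of_le_of_lt hb (mul_lt_mul_of_pos_right ha' hd)
    have : b < (a + 1) * 2 ^ d := by exact_mod_cast this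
    exact this

/-- Membership in the dyadic cube with index `(m, j)`, in the coordinate `(x - corner) / side`
relative to `Q0`. -/
lemma mem_dyadic_iff {Q0 Q : Cube n} {m : ℕ} {j : Fin n → ℕ} (hs : Q.side = Q0.side / 2 ^ m)
    (hc : ∀ i, Q.corner i = Q0.corner i + (j i : ℝ) * Q0.side / 2 ^ m) {x : Fin n → ℝ} :
    x ∈ Q.toSet ↔ ∀ i, (j i : ℝ) ≤ (x i - Q0.corner i) / Q0.side * 2 ^ m ∧
      (x i - Q0.corner i) / Q0.side * 2 ^ m < j i + 1 := by
  rw [Cube.mem_toSet]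
  refine forall_congr' fun i => ?_
  have h0 := Q0.side_pos
  have h2 : (0 : ℝ) < 2 ^ m := by positivity
  rw [hc, hs]
  have e1 : Q0.corner i + (j i : ℝ) * Q0.side / 2 ^ m ≤ x i ↔
      (j i : ℝ) ≤ (x i - Q0.corner i) / Q0.side * 2 ^ m := by
    rw [← le_sub_iff_add_le', div_le_iff₀ h2, div_mul_eq_mul_div, le_div_iff₀ h0]
  have e2 : x i < Q0.corner i + (j i : ℝ) * Q0.side / 2 ^ m + Q0.side / 2 ^ m ↔
      (x i - Q0.corner i) / Q0.side * 2 ^ m < j i + 1 := by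
    rw [add_assoc, ← add_div, ← sub_lt_iff_lt_add', lt_div_iff₀ h2, div_mul_eq_mul_div,
      div_lt_iff₀ h0, add_mul, one_mul]
  rw [e1, e2]

/-- A dyadic cube that meets another one of at least its size is contained in it. -/
lemma dyadic_subset {Q0 Q R : Cube n} (hQ : IsDyadicSubcube Q0 Q) (hR : IsDyadicSubcube Q0 R)
    {x : Fin n → ℝ} (hxQ : x ∈ Q.toSet) (hxR : x ∈ R.toSet) (hside : R.side ≤ Q.side) :
    R.toSet ⊆ Q.toSet := by
  obtain ⟨k, a, -, hQs, hQc⟩ := hQ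
  obtain ⟨l, b, -, hRs, hRc⟩ := hR
  have hkl : k ≤ l := by
    rw [hQs, hRs, div_le_div_iff_of_pos_left Q0.side_pos (by positivity) (by positivity)] at hside
    exact (pow_le_pow_iff_right₀ _root_.one_lt_two).1 hside
  intro y hy
  rw [mem_dyadic_iff hQs hQc] at hxQ ⊢
  rw [mem_dyadic_iff hRs hRc] at hxR hy
  intro i
  obtain ⟨h1, h2⟩ := dyadic_interval_nested hkl (hxQ i).1 (hxQ i).2 (hxR i).1 (hxR i).2
  obtain ⟨d, rfl⟩ := Nat.exists_eq_add_of_le hkl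
  rw [Nat.add_sub_cancel_left] at h1 h2
  have h1' : (a i : ℝ) * 2 ^ d ≤ b i := by exact_mod_cast h1
  have h2' : (b i : ℝ) + 1 ≤ (a i + 1) * 2 ^ d := by exact_mod_cast h2
  obtain ⟨h3, h4⟩ := hy i
  rw [pow_add, ← mul_assoc] at h3 h4
  have hd : (0 : ℝ) < 2 ^ d := by positivity
  exact ⟨le_of_mul_le_mul_right (h1'.trans h3) hd, lt_of_mul_lt_mul_right (h4.trans_le h2') hd.le⟩

lemma dyadic_nested {Q0 Q R : Cube n} (hQ : IsDyadicSubcube Q0 Q) (hR : IsDyadicSubcube Q0 R)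
    {x : Fin n → ℝ} (hxQ : x ∈ Q.toSet) (hxR : x ∈ R.toSet) :
    R.toSet ⊆ Q.toSet ∨ Q.toSet ⊆ R.toSet :=
  (le_total R.side Q.side).imp (dyadic_subset hQ hR hxQ hxR) (dyadic_subset hR hQ hxR hxQ)

lemma side_lt_of_ssubset {Q0 Q R : Cube n} (hQ : IsDyadicSubcube Q0 Q)
    (hR : IsDyadicSubcube Q0 R) (h : R.toSet ⊂ Q.toSet) : R.side < Q.side := by
  by_contra! hle
  exact h.2 (dyadic_subset hR hQ R.corner_mem (h.1 R.corner_mem) hle)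

lemma isDyadicSubcube_self (Q0 : Cube n) : IsDyadicSubcube Q0 Q0 :=
  ⟨0, fun _ => 0, by simp, by simp, by simp⟩

/-- Each point of `Q0` lies in a dyadic cube of every generation. -/
lemma exists_dyadic_mem (Q0 : Cube n) (m : ℕ) {x : Fin n → ℝ} (hx : x ∈ Q0.toSet) :
    ∃ Q, IsDyadicSubcube Q0 Q ∧ Q.side = Q0.side / 2 ^ m ∧ x ∈ Q.toSet := by
  have h0 := Q0.side_pos
  have h2 : (0 : ℝ) < 2 ^ m := by positivity
  set t : Fin n → ℝ := fun i => (x i - Q0.corner i) / Q0.side * 2 ^ m with ht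
  have ht0 : ∀ i, 0 ≤ t i := fun i =>
    mul_nonneg (div_nonneg (sub_nonneg.2 (Cube.mem_toSet.1 hx i).1) h0.le) h2.le
  have ht1 : ∀ i, t i < 2 ^ m := fun i => by
    have := (Cube.mem_toSet.1 hx i).2
    have : (x i - Q0.corner i) / Q0.side < 1 := by
      rw [div_lt_one h0]; linarith
    simpa [ht] using mul_lt_mul_of_pos_right this h2
  let Q : Cube n := ⟨fun i => Q0.corner i + (⌊t i⌋₊ : ℝ) * Q0.side / 2 ^ m, Q0.side / 2 ^ m,
    div_pos h0 h2⟩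
  refine ⟨Q, ⟨m, fun i => ⌊t i⌋₊, fun i => ?_, rfl, fun i => rfl⟩, rfl, ?_⟩
  · rw [Nat.floor_lt (ht0 i)]
    exact_mod_cast ht1 i
  · rw [mem_dyadic_iff (Q := Q) (j := fun i => ⌊t i⌋₊) rfl (fun i => rfl)]
    exact fun i => ⟨Nat.floor_le (ht0 i), Nat.lt_floor_add_one _⟩

lemma dyadic_subset_top {Q0 Q : Cube n} (hQ : IsDyadicSubcube Q0 Q) : Q.toSet ⊆ Q0.toSet := by
  obtain ⟨m, j, hj, hs, hc⟩ := hQ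
  have h0 := Q0.side_pos
  have h2 : (0 : ℝ) < 2 ^ m := by positivity
  intro y hy
  rw [mem_dyadic_iff hs hc] at hy
  rw [mem_dyadic_iff (m := 0) (j := fun _ => 0) (Q0 := Q0) (by simp) (by simp)]
  intro i
  have h1 : (j i : ℝ) + 1 ≤ 2 ^ m := by exact_mod_cast hj i
  have hj0 : (0 : ℝ) ≤ j i := Nat.cast_nonneg _
  constructor
  · simpa using le_of_mul_le_mul_right (by simpa using hj0.trans (hy i).1) h2
  · simpa using lt_of_mul_lt_mul_right (b := (y i - Q0.corner i) / Q0.side) (c := 1) (a := 2 ^ m)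
      (by simpa using (hy i).2.trans_le h1) h2.le

/-- The dyadic parent of `R`, when `R` is strictly contained in the dyadic cube `Q`. -/
lemma exists_parent {Q0 Q R : Cube n} (hQ : IsDyadicSubcube Q0 Q) (hR : IsDyadicSubcube Q0 R)
    (h : R.toSet ⊂ Q.toSet) :
    ∃ P, IsDyadicSubcube Q0 P ∧ R.toSet ⊂ P.toSet ∧ P.toSet ⊆ Q.toSet ∧
      P.vol = 2 ^ n * R.vol := by
  have hlt := side_lt_of_ssubset hQ hR h
  have hRx := R.corner_mem
  obtain ⟨l, b, -, hRs, -⟩ := id hR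
  obtain ⟨k, a, -, hQs, -⟩ := id hQ
  have h0 := Q0.side_pos
  have hkl : k < l := by
    rw [hQs, hRs, div_lt_div_iff_of_pos_left h0 (by positivity) (by positivity)] at hlt
    exact (pow_lt_pow_iff_right₀ _root_.one_lt_two).1 hlt
  obtain ⟨m, rfl⟩ : ∃ m, l = m + 1 := ⟨l - 1, by omega⟩
  obtain ⟨P, hP, hPs, hxP⟩ := exists_dyadic_mem Q0 m (dyadic_subset_top hR hRx)
  have hPR : P.side = 2 * R.side := by rw [hPs, hRs, pow_succ]; field_simp
  have hRpos := R.side_pos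
  have hPvol : P.vol = 2 ^ n * R.vol := by
    rw [Cube.vol_eq, Cube.vol_eq, hPR, ENNReal.ofReal_mul zero_le_two, mul_pow,
      ENNReal.ofReal_ofNat]
  refine ⟨P, hP, ⟨dyadic_subset hP hR hxP hRx (by linarith), fun hle => ?_⟩, ?_, hPvol⟩
  · have hsub : P.toSet = R.toSet :=
      hle.antisymm (dyadic_subset hP hR hxP hRx (by linarith))
    rcases Nat.eq_zero_or_pos n with rfl | hn
    · exact h.2 fun x _ => Subsingleton.elim R.corner x ▸ hRx
    · rw [Cube.eq_of_toSet_eq hn hsub] at hPR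
      linarith
  · refine dyadic_subset hQ hP (h.1 hRx) hxP ?_
    rw [hPs, hQs, div_le_div_iff_of_pos_left h0 (by positivity) (by positivity)]
    exact (pow_le_pow_iff_right₀ _root_.one_lt_two).2 (by omega)

lemma countable_dyadic (Q0 : Cube n) : {Q | IsDyadicSubcube Q0 Q}.Countable := by
  let g : ℕ × (Fin n → ℕ) → Cube n := fun q =>
    ⟨fun i => Q0.corner i + (q.2 i : ℝ) * Q0.side / 2 ^ q.1, Q0.side / 2 ^ q.1,
      div_pos Q0.side_pos (by positivity)⟩
  refine (Set.countable_range g).mono ?_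
  rintro ⟨c, s, hs⟩ ⟨m, j, -, h1, h2⟩
  refine ⟨(m, j), ?_⟩
  have hc : c = fun i => Q0.corner i + (j i : ℝ) * Q0.side / 2 ^ m := funext h2
  simp only at h1
  subst h1 hc
  rfl

/-- Every dyadic cube in `Q` with a property `p` lies in a maximal one. -/
lemma exists_maximal_dyadic {Q0 Q R : Cube n} (p : Cube n → Prop)
    (hR : IsDyadicSubcube Q0 R) (hRQ : R.toSet ⊂ Q.toSet) (hp : p R) :
    ∃ P, IsDyadicSubcube Q0 P ∧ P.toSet ⊂ Q.toSet ∧ p P ∧ R.toSet ⊆ P.toSet ∧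
      ∀ P', IsDyadicSubcube Q0 P' → P'.toSet ⊂ Q.toSet → p P' → P.toSet ⊆ P'.toSet →
        P'.toSet ⊆ P.toSet := by
  classical
  -- Among the competitors, one of minimal generation `m` is maximal.
  let q : ℕ → Prop := fun m => ∃ P, IsDyadicSubcube Q0 P ∧ P.toSet ⊂ Q.toSet ∧ p P ∧
    R.toSet ⊆ P.toSet ∧ P.side = Q0.side / 2 ^ m
  have hex : ∃ m, q m := by
    obtain ⟨m, -, -, hs, -⟩ := id hR
    exact ⟨m, R, hR, hRQ, hp, subset_rfl, hs⟩
  obtain ⟨P, hP, hPQ, hpP, hRP, hPs⟩ := Nat.find_spec hex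
  refine ⟨P, hP, hPQ, hpP, hRP, fun P' hP' hP'Q hpP' hPP' => ?_⟩
  obtain ⟨m', -, -, hs', -⟩ := id hP'
  have hmin : Nat.find hex ≤ m' := Nat.find_min' hex ⟨P', hP', hP'Q, hpP', hRP.trans hPP', hs'⟩
  refine dyadic_subset hP hP' P.corner_mem (hPP' P.corner_mem) ?_
  rw [hPs, hs', div_le_div_iff_of_pos_left Q0.side_pos (by positivity) (by positivity)]
  exact (pow_le_pow_iff_right₀ _root_.one_lt_two).2 hmin

/-! ### Averages and dyadic differentiation -/

lemma osc_mul_vol (Q : Cube n) (f : (Fin n → ℝ) → ℝ) :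
    osc Q f * Q.vol = ∫⁻ x in Q.toSet, ‖f x - cubeAvg Q f‖ₑ := by
  rw [osc, mul_comm, ← mul_assoc, ENNReal.mul_inv_cancel Q.vol_ne_zero Q.vol_ne_top, one_mul]
  rfl

lemma osc_ne_top {Q : Cube n} {f : (Fin n → ℝ) → ℝ} (hf : IntegrableOn f Q.toSet) :
    osc Q f ≠ ∞ := by
  have h : IntegrableOn (fun x => f x - cubeAvg Q f) Q.toSet :=
    hf.sub (integrableOn_const Q.vol_ne_top)
  exact ENNReal.mul_ne_top (ENNReal.inv_ne_top.2 Q.vol_ne_zero) h.2.ne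

lemma enorm_cubeAvg_sub_le {R : Cube n} {f : (Fin n → ℝ) → ℝ} (hf : IntegrableOn f R.toSet)
    (c : ℝ) : ‖cubeAvg R f - c‖ₑ * R.vol ≤ ∫⁻ x in R.toSet, ‖f x - c‖ₑ := by
  have hv : volume.real R.toSet ≠ 0 :=
    (ENNReal.toReal_pos R.vol_ne_zero R.vol_ne_top).ne'
  have h : ∫ x in R.toSet, (f x - c) = volume.real R.toSet * (cubeAvg R f - c) := by
    rw [integral_sub hf (integrableOn_const R.vol_ne_top), cubeAvg, setAverage_eq,
      setIntegral_const, smul_eq_mul, smul_eq_mul, mul_sub, mul_inv_cancel_left₀ hv]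
  refine le_trans (le_of_eq ?_) (enorm_integral_le_lintegral_enorm _)
  have hvol : ENNReal.ofReal (volume R.toSet).toReal = R.vol := ENNReal.ofReal_toReal R.vol_ne_top
  rw [h, enorm_mul, mul_comm, Real.enorm_eq_ofReal measureReal_nonneg, measureReal_def, hvol]

/-- Lebesgue differentiation along dyadic cubes: at almost every `x` in `Q0`, the averages over the
dyadic cubes containing `x` converge to `f x`. Up to a null set the cubes are closed balls of the sup norm of
`Fin n → ℝ`. -/
lemma ae_tendsto_cubeAvg {Q0 : Cube n} {f : (Fin n → ℝ) → ℝ} (hf : IntegrableOn f Q0.toSet) :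
    ∀ᵐ x, x ∈ Q0.toSet → ∀ R : ℕ → Cube n, (∀ m, IsDyadicSubcube Q0 (R m)) →
      (∀ m, (R m).side = Q0.side / 2 ^ m) → (∀ m, x ∈ (R m).toSet) →
      Filter.Tendsto (fun m => cubeAvg (R m) f) Filter.atTop (nhds (f x)) := by
  have hint : Integrable (Q0.toSet.indicator f) :=
    (integrable_indicator_iff Q0.measurableSet_toSet).2 hf
  filter_upwards [IsUnifLocDoublingMeasure.ae_tendsto_average volume
    hint.locallyIntegrable 1] with x hx hxQ R hR hs hxR
  have hball : ∀ m, (R m).toSet =ᵐ[volume]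
      Metric.closedBall (fun i => (R m).corner i + (R m).side / 2) ((R m).side / 2) := by
    intro m
    have e : Metric.closedBall (fun i => (R m).corner i + (R m).side / 2) ((R m).side / 2)
        = Set.Icc (R m).corner (fun i => (R m).corner i + (R m).side) := by
      rw [closedBall_pi _ (half_pos (R m).side_pos).le, ← Set.pi_univ_Icc]
      congr 1
      funext i
      rw [Real.closedBall_eq_Icc]
      congr 1 <;> ring
    rw [e]
    exact Measure.univ_pi_Ico_ae_eq_Icc
  have hlim := hx (fun m => fun i => (R m).corner i + (R m).side / 2) (fun m => (R m).side / 2)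
    (l := Filter.atTop) ?_ ?_
  · rw [Set.indicator_of_mem hxQ] at hlim
    refine hlim.congr fun m => ?_
    rw [cubeAvg, ← setAverage_congr (hball m)]
    refine setAverage_congr_fun (R m).measurableSet_toSet (Filter.Eventually.of_forall ?_)
    exact fun y hy => Set.indicator_of_mem (dyadic_subset_top (hR m) hy) f
  · rw [tendsto_nhdsWithin_iff]
    refine ⟨?_, Filter.Eventually.of_forall fun m => half_pos (R m).side_pos⟩
    have h := (tendsto_pow_atTop_nhds_zero_of_lt_one (r := (1 / 2 : ℝ)) (by norm_num)
      (by norm_num)).const_mul (Q0.side / 2)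
    rw [mul_zero] at h
    refine h.congr fun m => ?_
    rw [hs, one_div, inv_pow]
    ring
  · refine Filter.Eventually.of_forall fun m => ?_
    rw [one_mul, closedBall_pi _ (half_pos (R m).side_pos).le]
    intro i _
    have := Cube.mem_toSet.1 (hxR m) i
    simp only [Real.closedBall_eq_Icc]
    constructor <;> linarith [this.1, this.2]

/-! ### Stopping cubes -/

/-- The average of `|f - f_Q|` over `R` exceeds twice the mean oscillation of `f` on `Q`. -/
def Bad (f : (Fin n → ℝ) → ℝ) (Q R : Cube n) : Prop :=
  2 * osc Q f * R.vol < ∫⁻ x in R.toSet, ‖f x - cubeAvg Q f‖ₑ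

/-- The stopping cubes of `Q`: the maximal dyadic cubes strictly inside `Q` over which the average
of `|f - f_Q|` exceeds twice the mean oscillation of `f` on `Q`. -/
def stopCubes (Q0 : Cube n) (f : (Fin n → ℝ) → ℝ) (Q : Cube n) : Set (Cube n) :=
  {R | IsDyadicSubcube Q0 R ∧ R.toSet ⊂ Q.toSet ∧ Bad f Q R ∧
    ∀ R', IsDyadicSubcube Q0 R' → R'.toSet ⊂ Q.toSet → Bad f Q R' → R.toSet ⊆ R'.toSet →
      R'.toSet ⊆ R.toSet}

variable {Q0 : Cube n} {f : (Fin n → ℝ) → ℝ}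

lemma countable_stop (Q : Cube n) : (stopCubes Q0 f Q).Countable :=
  (countable_dyadic Q0).mono fun _ h => h.1

lemma stop_eq_of_mem (hn : 0 < n) {Q P R : Cube n} (hP : P ∈ stopCubes Q0 f Q)
    (hR : R ∈ stopCubes Q0 f Q)
    {x : Fin n → ℝ} (hxP : x ∈ P.toSet) (hxR : x ∈ R.toSet) : P = R := by
  apply Cube.eq_of_toSet_eq hn
  rcases dyadic_nested hP.1 hR.1 hxP hxR with h | h
  · exact (hR.2.2.2 P hP.1 hP.2.1 hP.2.2.1 h).antisymm h
  · exact h.antisymm (hP.2.2.2 R hR.1 hR.2.1 hR.2.2.1 h)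

lemma tsum_stop_le (hn : 0 < n) {Q : Cube n} (hfQ : IntegrableOn f Q.toSet) :
    ∑' P : stopCubes Q0 f Q, P.1.vol ≤ 1 / 2 * Q.vol := by
  have key : 2 * osc Q f * ∑' P : stopCubes Q0 f Q, P.1.vol ≤ osc Q f * Q.vol := by
    rw [← ENNReal.tsum_mul_left, osc_mul_vol]
    calc ∑' P : stopCubes Q0 f Q, 2 * osc Q f * P.1.vol
        ≤ ∑' P : stopCubes Q0 f Q, ∫⁻ x in P.1.toSet, ‖f x - cubeAvg Q f‖ₑ :=
          ENNReal.tsum_le_tsum fun P => P.2.2.2.1.le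
      _ = ∫⁻ x in ⋃ P ∈ stopCubes Q0 f Q, P.toSet, ‖f x - cubeAvg Q f‖ₑ := by
          rw [lintegral_biUnion (countable_stop Q) fun P _ => P.measurableSet_toSet]
          intro P hP R hR hne
          exact Set.disjoint_left.2 fun x hxP hxR => hne (stop_eq_of_mem hn hP hR hxP hxR)
      _ ≤ _ := lintegral_mono_set (Set.iUnion₂_subset fun P hP => hP.2.1.1)
  by_cases h0 : osc Q f = 0
  · have hemp : ∀ P : stopCubes Q0 f Q, False := fun ⟨P, hP⟩ => by
      have h1 : ∫⁻ x in P.toSet, ‖f x - cubeAvg Q f‖ₑ ≤ osc Q f * Q.vol := by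
        rw [osc_mul_vol]; exact lintegral_mono_set hP.2.1.1
      have h2 := hP.2.2.1.trans_le h1
      simp [h0] at h2
    have : IsEmpty (stopCubes Q0 f Q) := ⟨hemp⟩
    simp
  · rw [mul_comm 2, mul_assoc, ENNReal.mul_le_mul_iff_right h0 (osc_ne_top hfQ)] at key
    rw [one_div, mul_comm, ← div_eq_mul_inv, ENNReal.le_div_iff_mul_le (by simp) (by simp),
      mul_comm]
    exact key

/-- The parent of a stopping cube is not bad, so averages jump by a bounded multiple of the
oscillation. -/
lemma enorm_cubeAvg_stop_sub_le {Q P : Cube n} (hfQ : IntegrableOn f Q.toSet)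
    (hQ : IsDyadicSubcube Q0 Q) (hP : P ∈ stopCubes Q0 f Q) :
    ‖cubeAvg P f - cubeAvg Q f‖ₑ ≤ 2 ^ (n + 1) * osc Q f := by
  obtain ⟨R, hR, hPR, hRQ, hvol⟩ := exists_parent hQ hP.1 hP.2.1
  have hgood : ∫⁻ x in R.toSet, ‖f x - cubeAvg Q f‖ₑ ≤ 2 * osc Q f * R.vol := by
    by_cases hQR : Q.toSet ⊆ R.toSet
    · have e : R.toSet = Q.toSet := hRQ.antisymm hQR
      have ev : R.vol = Q.vol := by rw [Cube.vol, e, Cube.vol]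
      rw [e, ev, ← osc_mul_vol, mul_assoc, two_mul]
      exact le_self_add
    · by_contra! hbad
      exact hPR.2 (hP.2.2.2 R hR ⟨hRQ, hQR⟩ hbad hPR.1)
  have h := (enorm_cubeAvg_sub_le (hfQ.mono_set hP.2.1.1) (cubeAvg Q f)).trans
    ((lintegral_mono_set hPR.1).trans hgood)
  rw [hvol, ← mul_assoc, ENNReal.mul_le_mul_iff_left P.vol_ne_zero P.vol_ne_top] at h
  refine h.trans (le_of_eq ?_)
  rw [pow_succ]; ring

/-- Off the stopping cubes, `|f - f_Q|` is bounded almost everywhere by a multiple of the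
oscillation. -/
lemma ae_enorm_sub_le (hn : 0 < n) (hf : IntegrableOn f Q0.toSet) :
    ∀ᵐ x, ∀ Q, IsDyadicSubcube Q0 Q → x ∈ Q.toSet → (∀ P ∈ stopCubes Q0 f Q, x ∉ P.toSet) →
      ‖f x - cubeAvg Q f‖ₑ ≤ 2 * osc Q f := by
  filter_upwards [ae_tendsto_cubeAvg hf] with x hx Q hQ hxQ hout
  have hxQ0 := dyadic_subset_top hQ hxQ
  choose R hR hs hxR using fun m => exists_dyadic_mem Q0 m hxQ0
  have hlim := ((hx hxQ0 R hR hs hxR).sub_const (cubeAvg Q f)).enorm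
  refine le_of_tendsto hlim ?_
  obtain ⟨k, -, -, hQs, -⟩ := id hQ
  filter_upwards [Filter.eventually_gt_atTop k] with m hm
  have hlt : (R m).side < Q.side := by
    rw [hs, hQs, div_lt_div_iff_of_pos_left Q0.side_pos (by positivity) (by positivity)]
    exact (pow_lt_pow_iff_right₀ _root_.one_lt_two).2 hm
  have hsub : (R m).toSet ⊆ Q.toSet := dyadic_subset hQ (hR m) hxQ (hxR m) hlt.le
  have hss : (R m).toSet ⊂ Q.toSet := by
    refine ⟨hsub, fun h => hlt.ne ?_⟩
    rw [Cube.eq_of_toSet_eq hn (hsub.antisymm h)]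
  have hgood : ¬ Bad f Q (R m) := fun hbad => by
    obtain ⟨P, hP, hPQ, hPb, hRP, hmax⟩ := exists_maximal_dyadic (Bad f Q) (hR m) hss hbad
    exact hout P ⟨hP, hPQ, hPb, hmax⟩ (hRP (hxR m))
  have h := (enorm_cubeAvg_sub_le (hf.mono_set (dyadic_subset_top (hR m)))
    (cubeAvg Q f)).trans (not_lt.1 hgood)
  rwa [ENNReal.mul_le_mul_iff_left (R m).vol_ne_zero (R m).vol_ne_top] at h

/-! ### The sparse family generated by the stopping cubes -/

/-- The cubes obtained from `Q0` by iterating the stopping construction. -/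
inductive Sel (Q0 : Cube n) (f : (Fin n → ℝ) → ℝ) : Cube n → Prop
  | top : Sel Q0 f Q0
  | step {Q P : Cube n} : Sel Q0 f Q → P ∈ stopCubes Q0 f Q → Sel Q0 f P

lemma Sel.dyadic {Q : Cube n} (h : Sel Q0 f Q) : IsDyadicSubcube Q0 Q := by
  cases h with
  | top => exact isDyadicSubcube_self Q0
  | step _ hP => exact hP.1

/-- Two selected cubes with a common point are equal, or one of them lies in a stopping cube of
the other. -/
lemma Sel.trichotomy (hn : 0 < n) {Q R : Cube n} (hQ : Sel Q0 f Q) (hR : Sel Q0 f R)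
    {x : Fin n → ℝ} (hxQ : x ∈ Q.toSet) (hxR : x ∈ R.toSet) :
    R = Q ∨ (∃ P ∈ stopCubes Q0 f Q, R.toSet ⊆ P.toSet) ∨
      ∃ P ∈ stopCubes Q0 f R, Q.toSet ⊆ P.toSet := by
  induction hQ generalizing R with
  | top =>
    induction hR with
    | top => exact Or.inl rfl
    | @step R1 R h1 h2 ih =>
      rcases ih (h2.2.1.1 hxR) with rfl | ⟨P, hP, hRP⟩ | ⟨P, hP, hQP⟩
      · exact Or.inr (Or.inl ⟨R, h2, subset_rfl⟩)
      · exact Or.inr (Or.inl ⟨P, hP, h2.2.1.1.trans hRP⟩)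
      · exact absurd (hQP.trans hP.2.1.1) fun h =>
          hP.2.1.2 ((dyadic_subset_top h1.dyadic).trans hQP)
  | @step Q1 Q hQ1 hQ ihQ =>
    induction hR with
    | top =>
      refine Or.inr ?_
      rcases ihQ Sel.top (hQ.2.1.1 hxQ) hxR with rfl | ⟨P, hP, h⟩ | ⟨P, hP, h⟩
      · exact Or.inr ⟨Q, hQ, subset_rfl⟩
      · exact absurd ((dyadic_subset_top hQ1.dyadic).trans h) hP.2.1.2
      · exact Or.inr ⟨P, hP, hQ.2.1.1.trans h⟩
    | @step R1 R h1 h2 ihR =>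
      rcases ihQ (Sel.step h1 h2) (hQ.2.1.1 hxQ) hxR with rfl | ⟨P, hP, h⟩ | ⟨P, hP, h⟩
      · exact Or.inr (Or.inr ⟨Q, hQ, subset_rfl⟩)
      · obtain rfl := stop_eq_of_mem hn hP hQ (h hxR) hxQ
        rcases ihR (h2.2.1.1 hxR) with rfl | ⟨P', hP', h'⟩ | ⟨P', hP', h'⟩
        · exact Or.inr (Or.inl ⟨R, h2, subset_rfl⟩)
        · exact Or.inr (Or.inl ⟨P', hP', h2.2.1.1.trans h'⟩)
        · obtain rfl := stop_eq_of_mem hn hP' h2 (h' hxQ) hxR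
          exact Or.inl (Cube.eq_of_toSet_eq hn (h.antisymm h'))
      · exact Or.inr (Or.inr ⟨P, hP, hQ.2.1.1.trans h⟩)

lemma sparseChildren_subset_stop (hn : 0 < n) {Q : Cube n} (hQ : Sel Q0 f Q) :
    sparseChildren {R | Sel Q0 f R} Q ⊆ stopCubes Q0 f Q := by
  rintro R ⟨hR, hRQ, hmax⟩
  rcases hQ.trichotomy hn hR (hRQ.1 R.corner_mem) R.corner_mem with rfl | ⟨P, hP, h⟩ | ⟨P, hP, h⟩
  · exact absurd subset_rfl hRQ.2
  · have := hmax P (hQ.step hP) hP.2.1 h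
    rwa [Cube.eq_of_toSet_eq hn (h.antisymm this)]
  · exact absurd (h.trans hP.2.1.1) hRQ.2

lemma isSparse_sel (hn : 0 < n) (hf : IntegrableOn f Q0.toSet) :
    IsSparse Q0 {R | Sel Q0 f R} := by
  refine ⟨(countable_dyadic Q0).mono fun _ h => h.dyadic, fun _ h => h.dyadic, fun Q hQ => ?_⟩
  exact (ENNReal.tsum_mono_subtype Cube.vol (sparseChildren_subset_stop hn hQ)).trans
    (tsum_stop_le hn (hf.mono_set (dyadic_subset_top (Sel.dyadic hQ))))

lemma measurableSet_core {S : Set (Cube n)} (hS : S.Countable) (Q : Cube n) :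
    MeasurableSet (core S Q) :=
  Q.measurableSet_toSet.diff
    (MeasurableSet.biUnion (hS.mono fun _ h => h.1) fun P _ => P.measurableSet_toSet)

lemma vol_le_two_mul_core {S : Set (Cube n)} (hS : IsSparse Q0 S) {Q : Cube n} (hQ : Q ∈ S) :
    Q.vol ≤ 2 * volume (core S Q) := by
  have h1 : Q.vol ≤ volume (core S Q) + 1 / 2 * Q.vol := by
    calc Q.vol ≤ volume (core S Q ∪ ⋃ P ∈ sparseChildren S Q, P.toSet) := by
          refine measure_mono fun x hx => ?_
          by_cases h : x ∈ ⋃ P ∈ sparseChildren S Q, P.toSet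
          · exact Or.inr h
          · exact Or.inl ⟨hx, h⟩
      _ ≤ volume (core S Q) + volume (⋃ P ∈ sparseChildren S Q, P.toSet) := measure_union_le _ _
      _ ≤ volume (core S Q) + 1 / 2 * Q.vol := by
          gcongr
          exact (measure_biUnion_le volume (hS.1.mono fun _ h => h.1) _).trans (hS.2.2 Q hQ)
  have h2 : 1 / 2 * Q.vol + 1 / 2 * Q.vol = Q.vol := by
    rw [← add_mul, one_div, ENNReal.inv_two_add_inv_two, one_mul]
  have h3 : 1 / 2 * Q.vol ≤ volume (core S Q) := by
    have hfin : 1 / 2 * Q.vol ≠ ∞ := ENNReal.mul_ne_top (by simp) Q.vol_ne_top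
    exact (ENNReal.add_le_add_iff_right hfin).1 (h2.le.trans h1)
  calc Q.vol = 2 * (1 / 2 * Q.vol) := by rw [two_mul, h2]
    _ ≤ _ := by gcongr

/-! ### Descendants -/

/-- The union of the `m`-th generation stopping cubes below `Q`. -/
def desc (Q0 : Cube n) (f : (Fin n → ℝ) → ℝ) : ℕ → Cube n → Set (Fin n → ℝ)
  | 0, Q => Q.toSet
  | m + 1, Q => ⋃ P ∈ stopCubes Q0 f Q, desc Q0 f m P

lemma measurableSet_desc (m : ℕ) (Q : Cube n) : MeasurableSet (desc Q0 f m Q) := by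
  induction m generalizing Q with
  | zero => exact Q.measurableSet_toSet
  | succ m ih => exact MeasurableSet.biUnion (countable_stop Q) fun P _ => ih P

lemma desc_subset (m : ℕ) (Q : Cube n) : desc Q0 f m Q ⊆ Q.toSet := by
  induction m generalizing Q with
  | zero => exact subset_rfl
  | succ m ih => exact Set.iUnion₂_subset fun P hP => (ih P).trans hP.2.1.1

lemma volume_desc_le (hn : 0 < n) (hf : IntegrableOn f Q0.toSet) (m : ℕ) {Q : Cube n}
    (hQ : Q.toSet ⊆ Q0.toSet) : volume (desc Q0 f m Q) ≤ 2⁻¹ ^ m * Q.vol := by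
  induction m generalizing Q with
  | zero => simp [desc, Cube.vol]
  | succ m ih =>
    calc volume (desc Q0 f (m + 1) Q)
        ≤ ∑' P : stopCubes Q0 f Q, volume (desc Q0 f m P.1) :=
          measure_biUnion_le volume (countable_stop Q) _
      _ ≤ ∑' P : stopCubes Q0 f Q, 2⁻¹ ^ m * P.1.vol :=
          ENNReal.tsum_le_tsum fun P => ih (P.2.2.1.1.trans hQ)
      _ = 2⁻¹ ^ m * ∑' P : stopCubes Q0 f Q, P.1.vol := ENNReal.tsum_mul_left
      _ ≤ 2⁻¹ ^ m * (1 / 2 * Q.vol) := by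
          gcongr
          exact tsum_stop_le hn (hf.mono_set hQ)
      _ = _ := by rw [pow_succ, one_div, mul_assoc]

/-- Almost every point of `Q0` lies in finitely many selected cubes. -/
lemma ae_exists_notMem_desc (hn : 0 < n) (hf : IntegrableOn f Q0.toSet) :
    ∀ᵐ x, ∃ m, x ∉ desc Q0 f m Q0 := by
  have h0 : volume (⋂ m, desc Q0 f m Q0) = 0 := by
    have hlim : Filter.Tendsto (fun m : ℕ => (2⁻¹ : ℝ≥0∞) ^ m * Q0.vol) Filter.atTop
        (nhds (0 * Q0.vol)) :=
      ENNReal.Tendsto.mul_const (ENNReal.tendsto_pow_atTop_nhds_zero_of_lt_one (by simp))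
        (Or.inr Q0.vol_ne_top)
    rw [zero_mul] at hlim
    refine le_antisymm (ge_of_tendsto' hlim fun m => ?_) zero_le
    exact (measure_mono (Set.iInter_subset _ m)).trans (volume_desc_le hn hf m subset_rfl)
  filter_upwards [compl_mem_ae_iff.2 h0] with x hx
  simpa using hx

/-! ### Summation of the generations -/

/-- The `ℓ^p` sum of the oscillations over those selected cubes `Q` for which `x` lies in the
`j`-th generation below `Q`. -/
def layer (Q0 : Cube n) (f : (Fin n → ℝ) → ℝ) (p : ℝ) (j : ℕ) (x : Fin n → ℝ) : ℝ≥0∞ :=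
  (∑' Q : {Q | Sel Q0 f Q}, (desc Q0 f j Q.1).indicator (fun _ => osc Q.1 f ^ p) x) ^ (1 / p)

lemma countable_sel (Q0 : Cube n) (f : (Fin n → ℝ) → ℝ) : {Q | Sel Q0 f Q}.Countable :=
  (countable_dyadic Q0).mono fun _ h => h.dyadic

lemma measurable_layer (p : ℝ) (j : ℕ) : Measurable (layer Q0 f p j) := by
  have := (countable_sel Q0 f).to_subtype
  exact (Measurable.tsum fun Q : {Q | Sel Q0 f Q} =>
    measurable_const.indicator (measurableSet_desc j Q.1)).pow_const _

lemma osc_le_layer {p : ℝ} (hp : 0 < p) {j : ℕ} {Q : Cube n} (hQ : Sel Q0 f Q)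
    {x : Fin n → ℝ} (hx : x ∈ desc Q0 f j Q) : osc Q f ≤ layer Q0 f p j x := by
  rw [layer, one_div, ENNReal.le_rpow_inv_iff hp]
  have := ENNReal.le_tsum (f := fun Q : {Q | Sel Q0 f Q} =>
    (desc Q0 f j Q.1).indicator (fun _ => osc Q.1 f ^ p) x) ⟨Q, hQ⟩
  simpa [Set.indicator_of_mem hx] using this

/-- Pointwise domination of `|f - f_Q|` by the oscillations of the selected cubes containing `x`:
the `i`-th ancestor of the last selected cube containing `x` is counted in the `i`-th layer. -/
lemma enorm_sub_le_sum_layer {p : ℝ} (hp : 0 < p) (hf : IntegrableOn f Q0.toSet)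
    {x : Fin n → ℝ}
    (hx : ∀ Q, IsDyadicSubcube Q0 Q → x ∈ Q.toSet → (∀ P ∈ stopCubes Q0 f Q, x ∉ P.toSet) →
      ‖f x - cubeAvg Q f‖ₑ ≤ 2 * osc Q f) (m : ℕ) {Q : Cube n} (hQ : Sel Q0 f Q)
    (hm : x ∈ desc Q0 f m Q) (hm' : x ∉ desc Q0 f (m + 1) Q) :
    ‖f x - cubeAvg Q f‖ₑ ≤ 2 ^ (n + 1) * ∑ j ∈ Finset.range (m + 1), layer Q0 f p j x := by
  induction m generalizing Q with
  | zero =>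
    have h := hx Q hQ.dyadic hm fun P hP hxP => hm' (Set.mem_iUnion₂.2 ⟨P, hP, hxP⟩)
    have h2 : (2 : ℝ≥0∞) ≤ 2 ^ (n + 1) := by
      simpa using pow_le_pow_right₀ (a := (2 : ℝ≥0∞)) (by norm_num) (Nat.le_add_left 1 n)
    rw [zero_add, Finset.sum_range_one]
    exact h.trans (mul_le_mul' h2 (osc_le_layer hp hQ hm))
  | succ m ih =>
    obtain ⟨P, hP, hxP⟩ := Set.mem_iUnion₂.1 hm
    have h1 := ih (hQ.step hP) hxP fun h => hm' (Set.mem_iUnion₂.2 ⟨P, hP, h⟩)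
    have h2 := (enorm_cubeAvg_stop_sub_le (hf.mono_set (dyadic_subset_top hQ.dyadic))
      hQ.dyadic hP).trans (mul_le_mul_right (osc_le_layer hp hQ hm) _)
    rw [Finset.sum_range_succ, mul_add, ← sub_add_sub_cancel (f x) (cubeAvg P f)]
    exact (enorm_add_le _ _).trans (add_le_add h1 h2)

lemma sum_rpow_le_rpow_sum {ι : Type*} {p : ℝ} (hp : 1 ≤ p) (a : ι → ℝ≥0∞) :
    ∑' i, a i ^ p ≤ (∑' i, a i) ^ p := by
  classical
  have hfin : ∀ s : Finset ι, ∑ i ∈ s, a i ^ p ≤ (∑ i ∈ s, a i) ^ p := by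
    intro s
    induction s using Finset.induction_on with
    | empty => simp
    | insert i s hi ih =>
      rw [Finset.sum_insert hi, Finset.sum_insert hi]
      exact (add_le_add le_rfl ih).trans (ENNReal.add_rpow_le_rpow_add _ _ hp)
  rw [ENNReal.tsum_eq_iSup_sum]
  exact iSup_le fun s => (hfin s).trans
    (ENNReal.rpow_le_rpow (ENNReal.sum_le_tsum s) (zero_le_one.trans hp))

/-- The selected cubes form an admissible family, and each carries at least half of its mass on
its core. -/
lemma tsum_osc_rpow_le (hn : 0 < n) {p : ℝ} (hp : 1 < p) (hf : IntegrableOn f Q0.toSet) :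
    ∑' Q : {Q | Sel Q0 f Q}, osc Q.1 f ^ p * Q.1.vol ≤ 2 * sjnNorm Q0 p f ^ p := by
  have hp0 : 0 < p := zero_lt_one.trans hp
  set S : Set (Cube n) := {Q | Sel Q0 f Q} with hS
  have hsp : IsSparse Q0 S := isSparse_sel hn hf
  have := hsp.1.to_subtype
  have hsub : ∀ Q : S, core S Q.1 ⊆ Q0.toSet := fun Q =>
    Set.sdiff_subset.trans (dyadic_subset_top (hsp.2.1 Q.1 Q.2))
  have hmeas : ∀ Q : S, Measurable fun x => (core S Q.1).indicator (fun _ => osc Q.1 f) x ^ p :=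
    fun Q => (measurable_const.indicator (measurableSet_core hsp.1 Q.1)).pow_const p
  calc ∑' Q : S, osc Q.1 f ^ p * Q.1.vol
      ≤ ∑' Q : S, 2 * (osc Q.1 f ^ p * volume (core S Q.1)) := by
        refine ENNReal.tsum_le_tsum fun Q => ?_
        rw [mul_left_comm]
        gcongr
        exact vol_le_two_mul_core hsp Q.2
    _ = 2 * ∑' Q : S, ∫⁻ x in Q0.toSet, (core S Q.1).indicator (fun _ => osc Q.1 f) x ^ p := by
        rw [ENNReal.tsum_mul_left]
        congr 2
        funext Q
        have e : (fun x => (core S Q.1).indicator (fun _ => osc Q.1 f) x ^ p) =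
            (core S Q.1).indicator (fun _ => osc Q.1 f ^ p) := by
          funext x
          by_cases hx : x ∈ core S Q.1 <;> simp [hx, hp0]
        rw [e, lintegral_indicator_const (measurableSet_core hsp.1 Q.1),
          Measure.restrict_apply (measurableSet_core hsp.1 Q.1),
          Set.inter_eq_self_of_subset_left (hsub Q)]
    _ = 2 * ∫⁻ x in Q0.toSet, ∑' Q : S, (core S Q.1).indicator (fun _ => osc Q.1 f) x ^ p := by
        rw [lintegral_tsum fun Q => (hmeas Q).aemeasurable]
    _ ≤ 2 * ∫⁻ x in Q0.toSet, (∑' Q : S, (core S Q.1).indicator (fun _ => osc Q.1 f) x) ^ p := by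
        gcongr with x
        exact sum_rpow_le_rpow_sum hp.le _
    _ ≤ 2 * sjnNorm Q0 p f ^ p := by
        gcongr
        rw [← ENNReal.rpow_inv_le_iff hp0, ← one_div]
        exact le_iSup₂_of_le S hsp le_rfl

lemma lintegral_layer_rpow_le (hn : 0 < n) {p : ℝ} (hp : 1 < p) (hf : IntegrableOn f Q0.toSet)
    (j : ℕ) :
    ∫⁻ x in Q0.toSet, layer Q0 f p j x ^ p ≤ 2⁻¹ ^ j * (2 * sjnNorm Q0 p f ^ p) := by
  have hp0 : 0 < p := zero_lt_one.trans hp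
  have := (countable_sel Q0 f).to_subtype
  calc ∫⁻ x in Q0.toSet, layer Q0 f p j x ^ p
      = ∫⁻ x in Q0.toSet, ∑' Q : {Q | Sel Q0 f Q},
          (desc Q0 f j Q.1).indicator (fun _ => osc Q.1 f ^ p) x := by
        simp_rw [layer, one_div, ENNReal.rpow_inv_rpow hp0.ne']
    _ = ∑' Q : {Q | Sel Q0 f Q}, ∫⁻ x in Q0.toSet,
          (desc Q0 f j Q.1).indicator (fun _ => osc Q.1 f ^ p) x :=
        lintegral_tsum fun Q =>
          (measurable_const.indicator (measurableSet_desc j Q.1)).aemeasurable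
    _ ≤ ∑' Q : {Q | Sel Q0 f Q}, 2⁻¹ ^ j * (osc Q.1 f ^ p * Q.1.vol) := by
        refine ENNReal.tsum_le_tsum fun Q => ?_
        rw [lintegral_indicator_const (measurableSet_desc j Q.1), mul_left_comm]
        gcongr
        exact (Measure.restrict_apply_le _ _).trans
          (volume_desc_le hn hf j (dyadic_subset_top (Sel.dyadic Q.2)))
    _ ≤ _ := by
        rw [ENNReal.tsum_mul_left]
        gcongr
        exact tsum_osc_rpow_le hn hp hf

/-- Minkowski's inequality for a series of nonnegative functions. -/
lemma lintegral_tsum_rpow_le {α : Type*} [MeasurableSpace α] {μ : Measure α} {p : ℝ}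
    (hp : 1 ≤ p) {T : ℕ → α → ℝ≥0∞} (hT : ∀ j, Measurable (T j)) :
    (∫⁻ x, (∑' j, T j x) ^ p ∂μ) ^ (1 / p) ≤ ∑' j, (∫⁻ x, T j x ^ p ∂μ) ^ (1 / p) := by
  have hp0 : 0 < p := zero_lt_one.trans_le hp
  have hfin : ∀ N : ℕ, (∫⁻ x, (∑ j ∈ Finset.range N, T j x) ^ p ∂μ) ^ (1 / p) ≤
      ∑ j ∈ Finset.range N, (∫⁻ x, T j x ^ p ∂μ) ^ (1 / p) := by
    intro N
    induction N with
    | zero => simp [hp0]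
    | succ N ih =>
      simp_rw [Finset.sum_range_succ]
      refine (ENNReal.lintegral_Lp_add_le (f := fun x => ∑ j ∈ Finset.range N, T j x)
        (Finset.measurable_fun_sum _ fun j _ => hT j).aemeasurable (hT N).aemeasurable hp).trans ?_
      exact add_le_add ih le_rfl
  have hlim := lintegral_tendsto_of_tendsto_of_monotone (μ := μ)
    (f := fun N x => (∑ j ∈ Finset.range N, T j x) ^ p) (F := fun x => (∑' j, T j x) ^ p)
    (fun N => ((Finset.measurable_fun_sum _ fun j _ => hT j).pow_const p).aemeasurable)
    (Filter.Eventually.of_forall fun x N M hNM => ENNReal.rpow_le_rpow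
      (Finset.sum_le_sum_of_subset (Finset.range_mono hNM)) hp0.le)
    (Filter.Eventually.of_forall fun x =>
      (ENNReal.continuous_rpow_const.tendsto _).comp (ENNReal.tendsto_nat_tsum _))
  refine le_of_tendsto' ((ENNReal.continuous_rpow_const.tendsto _).comp hlim) fun N => ?_
  exact (hfin N).trans (ENNReal.sum_le_tsum _)

/-- The geometric series with ratio `2 ^ (-1 / p)` sums to at most `2 p`, by Bernoulli's
inequality `2 ^ (-1 / p) ≤ 1 - 1 / (2 p)`. -/
lemma tsum_geometric_rpow_le {p : ℝ} (hp : 1 < p) :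
    ∑' j : ℕ, ((2⁻¹ : ℝ≥0∞) ^ (1 / p)) ^ j ≤ 2 * ENNReal.ofReal p := by
  have hp0 : 0 < p := zero_lt_one.trans hp
  have hb : ((2 : ℝ)⁻¹) ^ (1 / p) ≤ 1 - 1 / (2 * p) := by
    have h := rpow_one_add_le_one_add_mul_self (s := -(2 : ℝ)⁻¹) (by norm_num)
      (p := 1 / p) (by positivity) (by rw [div_le_one hp0]; exact hp.le)
    have e1 : (1 : ℝ) + -2⁻¹ = 2⁻¹ := by norm_num
    have e2 : (1 : ℝ) + 1 / p * -2⁻¹ = 1 - 1 / (2 * p) := by field_simp; ring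
    rwa [e1, e2] at h
  have e : (2⁻¹ : ℝ≥0∞) ^ (1 / p) = ENNReal.ofReal ((2 : ℝ)⁻¹ ^ (1 / p)) := by
    rw [← ENNReal.ofReal_rpow_of_pos (by norm_num), ENNReal.ofReal_inv_of_pos (by norm_num),
      ENNReal.ofReal_ofNat]
  rw [ENNReal.tsum_geometric, e, ← ENNReal.ofReal_one, ← ENNReal.ofReal_sub _ (by positivity)]
  have h2 : 2 * ENNReal.ofReal p = (ENNReal.ofReal (1 / (2 * p)))⁻¹ := by
    rw [← ENNReal.ofReal_inv_of_pos (by positivity), one_div, inv_inv,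
      ENNReal.ofReal_mul zero_le_two, ENNReal.ofReal_ofNat]
  rw [h2]
  exact ENNReal.inv_le_inv.2 (ENNReal.ofReal_le_ofReal (by linarith))

lemma lintegral_tsum_layer_le (hn : 0 < n) {p : ℝ} (hp : 1 < p) (hf : IntegrableOn f Q0.toSet) :
    (∫⁻ x in Q0.toSet, (∑' j, layer Q0 f p j x) ^ p) ^ (1 / p) ≤
      4 * ENNReal.ofReal p * sjnNorm Q0 p f := by
  have hp0 : 0 < p := zero_lt_one.trans hp
  have h0 : 0 ≤ 1 / p := by positivity
  have h1 : 1 / p ≤ 1 := by rw [div_le_one hp0]; exact hp.le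
  calc (∫⁻ x in Q0.toSet, (∑' j, layer Q0 f p j x) ^ p) ^ (1 / p)
      ≤ ∑' j, (∫⁻ x in Q0.toSet, layer Q0 f p j x ^ p) ^ (1 / p) :=
        lintegral_tsum_rpow_le hp.le fun j => measurable_layer p j
    _ ≤ ∑' j : ℕ, ((2⁻¹ : ℝ≥0∞) ^ (1 / p)) ^ j * (2 * sjnNorm Q0 p f) := by
        refine ENNReal.tsum_le_tsum fun j => ?_
        refine (ENNReal.rpow_le_rpow (lintegral_layer_rpow_le hn hp hf j) h0).trans ?_
        rw [ENNReal.mul_rpow_of_nonneg _ _ h0, ENNReal.mul_rpow_of_nonneg _ _ h0,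
          ← ENNReal.rpow_mul (sjnNorm Q0 p f), mul_one_div_cancel hp0.ne', ENNReal.rpow_one]
        have e : ((2⁻¹ : ℝ≥0∞) ^ j) ^ (1 / p) = ((2⁻¹ : ℝ≥0∞) ^ (1 / p)) ^ j := by
          rw [← ENNReal.rpow_natCast, ← ENNReal.rpow_natCast, ← ENNReal.rpow_mul,
            ← ENNReal.rpow_mul, mul_comm]
        rw [e]
        gcongr
        simpa using ENNReal.rpow_le_rpow_of_exponent_le (x := 2) (by norm_num) h1
    _ ≤ 2 * ENNReal.ofReal p * (2 * sjnNorm Q0 p f) := by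
        rw [ENNReal.tsum_mul_right]
        gcongr
        exact tsum_geometric_rpow_le hp
    _ = _ := by ring

/-- There is a purely dimensional constant `c_n` such that for every `p ∈ (1,∞)` and
`f ∈ L¹(Q0)`, `‖f − f_{Q0}‖_{L^p(Q0)} ≤ c_n · p · ‖f‖_{SJN_p(Q0)}`. -/
theorem statement8 {n : ℕ} (hn : 0 < n) :
    ∃ c : ℝ≥0∞, c ≠ 0 ∧ c ≠ ∞ ∧
      ∀ p : ℝ, 1 < p → ∀ (Q0 : Cube n) (f : (Fin n → ℝ) → ℝ),
        IntegrableOn f Q0.toSet volume →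
        eLpNorm (fun x => f x - cubeAvg Q0 f) (ENNReal.ofReal p)
            (volume.restrict Q0.toSet)
          ≤ c * ENNReal.ofReal p * sjnNorm Q0 p f := by
  refine ⟨2 ^ (n + 1) * 4, by positivity, ENNReal.mul_ne_top (by simp) (by simp), ?_⟩
  intro p hp Q0 f hf
  have hp0 : 0 < p := zero_lt_one.trans hp
  have hae : ∀ᵐ x ∂volume.restrict Q0.toSet,
      ‖f x - cubeAvg Q0 f‖ₑ ≤ 2 ^ (n + 1) * ∑' j, layer Q0 f p j x := by
    rw [ae_restrict_iff' Q0.measurableSet_toSet]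
    filter_upwards [ae_enorm_sub_le hn hf, ae_exists_notMem_desc hn hf] with x hx hex hxQ
    -- `m + 1` is the first generation of stopping cubes that misses `x`.
    classical
    obtain ⟨m, hm⟩ : ∃ m, Nat.find hex = m + 1 := by
      refine Nat.exists_eq_succ_of_ne_zero fun h0 => ?_
      have := Nat.find_spec hex
      rw [h0] at this
      exact this hxQ
    have hm1 : x ∉ desc Q0 f (m + 1) Q0 := hm ▸ Nat.find_spec hex
    have hm0 : x ∈ desc Q0 f m Q0 := not_not.1 (Nat.find_min hex (by omega))
    refine (enorm_sub_le_sum_layer hp0 hf hx m Sel.top hm0 hm1).trans ?_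
    gcongr
    exact ENNReal.sum_le_tsum _
  rw [eLpNorm_eq_lintegral_rpow_enorm_toReal (by simpa using hp0) ENNReal.ofReal_ne_top,
    ENNReal.toReal_ofReal hp0.le]
  calc (∫⁻ x in Q0.toSet, ‖f x - cubeAvg Q0 f‖ₑ ^ p) ^ (1 / p)
      ≤ (∫⁻ x in Q0.toSet, (2 ^ (n + 1) * ∑' j, layer Q0 f p j x) ^ p) ^ (1 / p) := by
        refine ENNReal.rpow_le_rpow (lintegral_mono_ae ?_) (by positivity)
        filter_upwards [hae] with x hx
        exact ENNReal.rpow_le_rpow hx hp0.le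
    _ = 2 ^ (n + 1) * (∫⁻ x in Q0.toSet, (∑' j, layer Q0 f p j x) ^ p) ^ (1 / p) := by
        simp_rw [ENNReal.mul_rpow_of_nonneg _ _ hp0.le]
        rw [lintegral_const_mul _ ((Measurable.tsum fun j =>
            measurable_layer p j).pow_const p),
          ENNReal.mul_rpow_of_nonneg _ _ (by positivity : 0 ≤ 1 / p), one_div,
          ENNReal.rpow_rpow_inv hp0.ne']
    _ ≤ 2 ^ (n + 1) * (4 * ENNReal.ofReal p * sjnNorm Q0 p f) := by
        gcongr
        exact lintegral_tsum_layer_le hn hp hf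
    _ = 2 ^ (n + 1) * 4 * ENNReal.ofReal p * sjnNorm Q0 p f := by ring

end SparseBrudnyi
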